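/- Let K ≥ 2, a > 0, R > 0, σ² > 0, η_1, ..., η_K > 0, and assume 0 < (K-1)·a < 1. Let p̃ be the operating-point profile p̃_i = (σ²/η_i)·γ̃/(1-(K-1)·γ̃) with γ̃ = a/(1+(K-1)·a), and let p* be the one-shot Nash profile p_i* = (σ²/η_i)·a/(1-(K-1)·a). Then for every player i, u_i(p̃)/u_i(p*) = exp(-(K-1)·a)/(1 - (K-1)·a) > 1; in particular the operating point strictly Pareto-dominates the one-shot Nash equilibrium. -/

import Mathlib

/-!
Received powers that all equal `σ² γ / (1 - (K - 1) γ)` give every player the SINR `γ`, hence the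
utility `R η_i / σ² * (1 - (K - 1) γ) / γ * exp (-a / γ)`. The Nash profile is the case `γ = a`.
For `γ = γ̃` one has `(1 - (K - 1) γ̃) / γ̃ = 1 / a` and `a / γ̃ = 1 + (K - 1) a`, so with
`x = (K - 1) a` the utility ratio is `exp (-x) / (1 - x)`, which exceeds `1` because
`1 - x < exp (-x)`.
-/

theorem one_lt_exp_neg_div_one_sub {x : ℝ} (hx : x ≠ 0) (hx1 : x < 1) :
    1 < Real.exp (-x) / (1 - x) :=
  (one_lt_div (sub_pos.2 hx1)).2 (Real.one_sub_lt_exp_neg hx)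

namespace MultipleAccess

/-- The common SINR `γ̃` of the operating point, for players facing `m` interferers each and the
efficiency function `exp (-a / ·)`. -/
noncomputable def operatingSinr (m a : ℝ) : ℝ :=
  a / (1 + m * a)

theorem one_sub_mul_operatingSinr {m a : ℝ} (h : 1 + m * a ≠ 0) :
    1 - m * operatingSinr m a = (1 + m * a)⁻¹ := by
  unfold operatingSinr
  field_simp
  ring

theorem one_sub_mul_operatingSinr_div {m a : ℝ} (h : 1 + m * a ≠ 0) :
    (1 - m * operatingSinr m a) / operatingSinr m a = a⁻¹ := by
  rw [one_sub_mul_operatingSinr h, operatingSinr]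
  field_simp

theorem neg_div_operatingSinr {m a : ℝ} (ha : a ≠ 0) :
    -a / operatingSinr m a = -(m * a) + -1 := by
  rw [operatingSinr, div_div_eq_mul_div, neg_mul, neg_div, mul_div_cancel_left₀ _ ha]
  ring

variable {ι : Type*} [Fintype ι]

section Power

/-- The power profile at which all players reach the same SINR `γ` against the noise power `σ2`,
for channel gains `η`. The SINR is reachable with positive powers when `0 < γ` and
`(Fintype.card ι - 1) * γ < 1`. -/
noncomputable def balancedPower (η : ι → ℝ) (σ2 γ : ℝ) (i : ι) : ℝ :=
  σ2 / η i * (γ / (1 - (Fintype.card ι - 1) * γ))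

variable {η : ι → ℝ} {σ2 γ : ℝ} {i : ι}

theorem balancedPower_pos (hσ : 0 < σ2) (hη : 0 < η i) (hγ : 0 < γ)
    (h : (Fintype.card ι - 1) * γ < 1) : 0 < balancedPower η σ2 γ i :=
  mul_pos (div_pos hσ hη) (div_pos hγ (sub_pos.2 h))

theorem balancedPower_mul_gain (hη : η i ≠ 0) :
    balancedPower η σ2 γ i * η i = σ2 * (γ / (1 - (Fintype.card ι - 1) * γ)) := by
  rw [balancedPower, mul_right_comm, div_mul_cancel₀ _ hη]

end Power

variable [DecidableEq ι]

/-- The signal-to-interference-plus-noise ratio of player `i` at the power profile `p`, for channel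
gains `η` and noise power `σ2`. -/
noncomputable def sinr (η : ι → ℝ) (σ2 : ℝ) (p : ι → ℝ) (i : ι) : ℝ :=
  p i * η i / ((∑ j ∈ Finset.univ.erase i, p j * η j) + σ2)

/-- The instantaneous utility of player `i` at the power profile `p`: the rate `R`, weighted by the
efficiency `exp (-a / SINR)`, per unit of transmit power. The relation `a = 2 ^ R - 1` is not
built in. -/
noncomputable def utility (η : ι → ℝ) (σ2 a R : ℝ) (p : ι → ℝ) (i : ι) : ℝ :=
  R * Real.exp (-a / sinr η σ2 p i) / p i

variable {η : ι → ℝ} {σ2 a R γ : ℝ}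

theorem utility_pos {p : ι → ℝ} {i : ι} (hR : 0 < R) (hp : 0 < p i) :
    0 < utility η σ2 a R p i :=
  div_pos (mul_pos hR (Real.exp_pos _)) hp

theorem interference_balancedPower (hη : ∀ j, η j ≠ 0) (i : ι) :
    ∑ j ∈ Finset.univ.erase i, balancedPower η σ2 γ j * η j =
      (Fintype.card ι - 1) * (σ2 * (γ / (1 - (Fintype.card ι - 1) * γ))) := by
  have card_interferers : ((Finset.univ.erase i).card : ℝ) = Fintype.card ι - 1 :=
    Finset.cast_card_erase_of_mem (Finset.mem_univ i)
  simp only [balancedPower_mul_gain (hη _), Finset.sum_const, nsmul_eq_mul, card_interferers]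

theorem sinr_balancedPower (hσ : σ2 ≠ 0) (hη : ∀ j, η j ≠ 0)
    (h : 1 - (Fintype.card ι - 1) * γ ≠ 0) (i : ι) :
    sinr η σ2 (balancedPower η σ2 γ) i = γ := by
  have interference_add_noise :
      (∑ j ∈ Finset.univ.erase i, balancedPower η σ2 γ j * η j) + σ2 =
        σ2 / (1 - (Fintype.card ι - 1) * γ) := by
    rw [interference_balancedPower hη, eq_div_iff h]
    field_simp
    ring
  rw [sinr, interference_add_noise, balancedPower_mul_gain (hη i), ← mul_div_assoc,
    div_div_div_cancel_right₀ h, mul_div_cancel_left₀ _ hσ]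

theorem utility_balancedPower (hσ : σ2 ≠ 0) (hη : ∀ j, η j ≠ 0)
    (h : 1 - (Fintype.card ι - 1) * γ ≠ 0) (i : ι) :
    utility η σ2 a R (balancedPower η σ2 γ) i =
      R * η i / σ2 * ((1 - (Fintype.card ι - 1) * γ) / γ) * Real.exp (-a / γ) := by
  rw [utility, sinr_balancedPower hσ hη h, balancedPower]
  field_simp

theorem utility_nash (ha : a ≠ 0) (hσ : σ2 ≠ 0) (hη : ∀ j, η j ≠ 0)
    (h : 1 - (Fintype.card ι - 1) * a ≠ 0) (i : ι) :
    utility η σ2 a R (balancedPower η σ2 a) i =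
      R * η i / σ2 * ((1 - (Fintype.card ι - 1) * a) / a) * Real.exp (-1) := by
  rw [utility_balancedPower hσ hη h, neg_div, div_self ha]

theorem utility_operatingPoint (ha : a ≠ 0) (hσ : σ2 ≠ 0) (hη : ∀ j, η j ≠ 0)
    (h : 1 + (Fintype.card ι - 1) * a ≠ 0) (i : ι) :
    utility η σ2 a R (balancedPower η σ2 (operatingSinr (Fintype.card ι - 1) a)) i =
      R * η i / σ2 * a⁻¹ * (Real.exp (-((Fintype.card ι - 1) * a)) * Real.exp (-1)) := by
  have slack_ne_zero :
      1 - ((Fintype.card ι : ℝ) - 1) * operatingSinr (Fintype.card ι - 1) a ≠ 0 := by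
    rw [one_sub_mul_operatingSinr h]
    exact inv_ne_zero h
  rw [utility_balancedPower hσ hη slack_ne_zero, one_sub_mul_operatingSinr_div h,
    neg_div_operatingSinr ha, Real.exp_add]

theorem utility_operatingPoint_div_utility_nash (ha : a ≠ 0) (hR : R ≠ 0) (hσ : σ2 ≠ 0)
    (hη : ∀ j, η j ≠ 0) (h_nash : 1 - (Fintype.card ι - 1) * a ≠ 0)
    (h_op : 1 + (Fintype.card ι - 1) * a ≠ 0) (i : ι) :
    utility η σ2 a R (balancedPower η σ2 (operatingSinr (Fintype.card ι - 1) a)) i /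
        utility η σ2 a R (balancedPower η σ2 a) i =
      Real.exp (-((Fintype.card ι - 1) * a)) / (1 - (Fintype.card ι - 1) * a) := by
  have gain_ne_zero := hη i
  rw [utility_operatingPoint ha hσ hη h_op, utility_nash ha hσ hη h_nash]
  field_simp

end MultipleAccess

open MultipleAccess in
theorem operating_point_pareto_dominates_nash_general {ι : Type*} [Fintype ι] [DecidableEq ι]
    [Nontrivial ι] {a R σ2 : ℝ} (ha : 0 < a) (hR : 0 < R) (hσ : 0 < σ2) {η : ι → ℝ}
    (hη : ∀ i, 0 < η i) (ha1 : (Fintype.card ι - 1) * a < 1) :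
    (∀ i, utility η σ2 a R (balancedPower η σ2 (operatingSinr (Fintype.card ι - 1) a)) i /
        utility η σ2 a R (balancedPower η σ2 a) i =
      Real.exp (-((Fintype.card ι - 1) * a)) / (1 - (Fintype.card ι - 1) * a)) ∧
    1 < Real.exp (-((Fintype.card ι - 1) * a)) / (1 - (Fintype.card ι - 1) * a) ∧
    ∀ i, utility η σ2 a R (balancedPower η σ2 a) i <
      utility η σ2 a R (balancedPower η σ2 (operatingSinr (Fintype.card ι - 1) a)) i := by
  have load_pos : 0 < ((Fintype.card ι : ℝ) - 1) * a :=
    mul_pos (sub_pos.2 (Nat.one_lt_cast.2 Fintype.one_lt_card)) ha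
  have ratio := utility_operatingPoint_div_utility_nash ha.ne' hR.ne' hσ.ne'
    (fun j => (hη j).ne') (sub_pos.2 ha1).ne' (add_pos one_pos load_pos).ne'
  have one_lt_ratio := one_lt_exp_neg_div_one_sub load_pos.ne' ha1
  refine ⟨ratio, one_lt_ratio, fun i => ?_⟩
  have nash_utility_pos : 0 < utility η σ2 a R (balancedPower η σ2 a) i :=
    utility_pos hR (balancedPower_pos hσ (hη i) ha ha1)
  rwa [← ratio i, one_lt_div nash_utility_pos] at one_lt_ratio

/-- With `0 < (K-1)*a < 1`, comparing the operating point `p̃` (common SINR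
`γ̃ = a/(1+(K-1)a)`) with the one-shot Nash profile `p*` (common SINR `a`):
for every player the utility ratio equals `exp (-(K-1)*a) / (1 - (K-1)*a) > 1`,
so the operating point strictly Pareto-dominates the Nash equilibrium. -/
theorem operating_point_pareto_dominates_nash (K : ℕ) (hK : 2 ≤ K) (a R σ2 : ℝ)
    (ha : 0 < a) (hR : 0 < R) (hσ : 0 < σ2) (η : Fin K → ℝ) (hη : ∀ i, 0 < η i)
    (ha1 : ((K : ℝ) - 1) * a < 1)
    (γ : ℝ) (hγ : γ = a / (1 + ((K : ℝ) - 1) * a))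
    (ptil : Fin K → ℝ) (hptil : ∀ i, ptil i = σ2 / η i * (γ / (1 - ((K : ℝ) - 1) * γ)))
    (pstar : Fin K → ℝ) (hpstar : ∀ i, pstar i = σ2 / η i * (a / (1 - ((K : ℝ) - 1) * a))) :
    (∀ i,
      (R * Real.exp (-a / (ptil i * η i /
          ((∑ j ∈ Finset.univ.erase i, ptil j * η j) + σ2))) / ptil i) /
      (R * Real.exp (-a / (pstar i * η i /
          ((∑ j ∈ Finset.univ.erase i, pstar j * η j) + σ2))) / pstar i)
        = Real.exp (-(((K : ℝ) - 1) * a)) / (1 - ((K : ℝ) - 1) * a)) ∧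
    1 < Real.exp (-(((K : ℝ) - 1) * a)) / (1 - ((K : ℝ) - 1) * a) ∧
    ∀ i,
      R * Real.exp (-a / (pstar i * η i /
          ((∑ j ∈ Finset.univ.erase i, pstar j * η j) + σ2))) / pstar i
        < R * Real.exp (-a / (ptil i * η i /
            ((∑ j ∈ Finset.univ.erase i, ptil j * η j) + σ2))) / ptil i := by
  have : Nontrivial (Fin K) := Fin.nontrivial_iff_two_le.2 hK
  open MultipleAccess in
  simpa only [hptil, hpstar, hγ, utility, sinr, balancedPower, operatingSinr,
    Fintype.card_fin] using
    operating_point_pareto_dominates_nash_general ha hR hσ hη (by rwa [Fintype.card_fin])
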